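/- Let Γ ⊂ ℝ³ be a compact set, let σ be the two-dimensional Hausdorff measure restricted to Γ, assumed finite, let κ > 0, and let g : Γ → ℂ³ be bounded and σ-measurable. Define A(x) := ∫_Γ Φ(x,y;κ) g(y) dσ(y) and ψ := κ^{−2} curl curl A on ℝ³ ∖ Γ. Then, uniformly over unit vectors x̂ ∈ S², r e^{−iκr} ψ(r x̂) converges as r → ∞ to the far-field pattern ψ_∞(x̂) = (1/4π) x̂ × ∫_Γ (g(y) × x̂) e^{−iκ x̂·y} dσ(y). -/

import Mathlib

noncomputable section
open Real MeasureTheory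
open scoped BigOperators Topology

abbrev V3 : Type := EuclideanSpace ℝ (Fin 3)

noncomputable def pd (i : Fin 3) (f : V3 → ℂ) : V3 → ℂ :=
  fun x => fderiv ℝ f x (EuclideanSpace.single i (1:ℝ))

noncomputable def pdR (i : Fin 3) (f : V3 → ℝ) : V3 → ℝ :=
  fun x => fderiv ℝ f x (EuclideanSpace.single i (1:ℝ))

noncomputable def lap (f : V3 → ℂ) : V3 → ℂ :=
  fun x => ∑ i, pd i (pd i f) x

noncomputable def div3 (u : V3 → Fin 3 → ℂ) : V3 → ℂ :=
  fun x => ∑ i, pd i (fun y => u y i) x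

noncomputable def grad3 (f : V3 → ℂ) : V3 → Fin 3 → ℂ :=
  fun x i => pd i f x

noncomputable def vlap (u : V3 → Fin 3 → ℂ) : V3 → Fin 3 → ℂ :=
  fun x j => lap (fun y => u y j) x

noncomputable def curl3 (u : V3 → Fin 3 → ℂ) : V3 → Fin 3 → ℂ :=
  fun x => ![pd 1 (fun y => u y 2) x - pd 2 (fun y => u y 1) x,
             pd 2 (fun y => u y 0) x - pd 0 (fun y => u y 2) x,
             pd 0 (fun y => u y 1) x - pd 1 (fun y => u y 0) x]

def crossC (a b : Fin 3 → ℂ) : Fin 3 → ℂ :=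
  ![a 1 * b 2 - a 2 * b 1, a 2 * b 0 - a 0 * b 2, a 0 * b 1 - a 1 * b 0]

def crossR (a b : Fin 3 → ℝ) : Fin 3 → ℝ :=
  ![a 1 * b 2 - a 2 * b 1, a 2 * b 0 - a 0 * b 2, a 0 * b 1 - a 1 * b 0]

def dotR (a b : Fin 3 → ℝ) : ℝ := ∑ i, a i * b i
def dotC (a b : Fin 3 → ℂ) : ℂ := ∑ i, a i * b i
def castC (a : Fin 3 → ℝ) : Fin 3 → ℂ := fun i => (a i : ℂ)

/-- The Navier equation `μ Δu + (λ+μ) ∇(∇·u) + ω² u = 0` on a set `U`. -/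
def NavierOn (μ lam ω : ℝ) (u : V3 → Fin 3 → ℂ) (U : Set V3) : Prop :=
  ∀ x ∈ U, ∀ j, (μ:ℂ) * vlap u x j + ((lam + μ : ℝ):ℂ) * grad3 (div3 u) x j
      + ((ω^2 : ℝ):ℂ) * u x j = 0

/-- fundamental solution of the 3D Helmholtz equation -/
noncomputable def Phi (κ : ℂ) (x y : V3) : ℂ :=
  Complex.exp (Complex.I * κ * (‖x - y‖ : ℝ)) / (4 * (π:ℂ) * (‖x - y‖ : ℝ))

noncomputable def gradPhi (κ : ℂ) (x y : V3) : Fin 3 → ℂ :=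
  fun i => pd i (fun z => Phi κ z y) x


/-- first radial factor -/
def fR (κ s : ℝ) : ℂ := Complex.exp (Complex.I * κ * s) / (4 * (π:ℂ) * s)
def pR (κ s : ℝ) : ℂ := (Complex.I * κ / s - 1 / (s:ℂ)^2) * fR κ s
def qR (κ s : ℝ) : ℂ :=
  (-(κ:ℂ)^2 / (s:ℂ)^2 - 3 * Complex.I * κ / (s:ℂ)^3 + 3 / (s:ℂ)^4) * fR κ s

lemma ffp_fR_deriv (κ s : ℝ) (hs : s ≠ 0) : HasDerivAt (fR κ) ((s:ℂ) * pR κ s) s := by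
  have hs' : (s:ℂ) ≠ 0 := by exact_mod_cast hs
  have hpi : (π:ℂ) ≠ 0 := by exact_mod_cast Real.pi_ne_zero
  have h0 : HasDerivAt (fun s : ℝ => (s:ℂ)) 1 s := Complex.ofRealCLM.hasDerivAt
  have h1 := (h0.const_mul (Complex.I * κ)).cexp
  have h2 := h0.const_mul (4 * (π:ℂ))
  have h3 := h1.div h2 (by simp [hs, Real.pi_ne_zero])
  refine h3.congr_deriv ?_
  simp only [pR, fR]
  field_simp

lemma ffp_pR_deriv (κ s : ℝ) (hs : s ≠ 0) : HasDerivAt (pR κ) ((s:ℂ) * qR κ s) s := by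
  have hs' : (s:ℂ) ≠ 0 := by exact_mod_cast hs
  have hpi : (π:ℂ) ≠ 0 := by exact_mod_cast Real.pi_ne_zero
  have h0 : HasDerivAt (fun s : ℝ => (s:ℂ)) 1 s := Complex.ofRealCLM.hasDerivAt
  have h1 := (hasDerivAt_const s (Complex.I * (κ:ℂ))).div h0 hs'
  have h2 := (hasDerivAt_const s (1:ℂ)).div (h0.pow 2) (pow_ne_zero 2 hs')
  have h3 := (h1.sub h2).mul (ffp_fR_deriv κ s hs)
  refine h3.congr_deriv ?_
  simp only [pR, qR, fR, Pi.sub_apply, Pi.div_apply, Pi.pow_apply]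
  field_simp
  ring_nf
  simp only [Complex.I_sq]
  ring

lemma ffp_fR_smooth (κ s : ℝ) (hs : s ≠ 0) : ContDiffAt ℝ 1 (fR κ) s := by
  have hc : ContDiffAt ℝ 1 (fun s : ℝ => (s:ℂ)) s := Complex.ofRealCLM.contDiff.contDiffAt
  unfold fR
  simp only [div_eq_mul_inv]
  refine ContDiffAt.mul ?_ (ContDiffAt.inv ?_ (by simp [hs, Real.pi_ne_zero]))
  · exact (contDiffAt_const.mul hc).cexp
  · exact contDiffAt_const.mul hc

lemma ffp_pR_smooth (κ s : ℝ) (hs : s ≠ 0) : ContDiffAt ℝ 1 (pR κ) s := by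
  have hc : ContDiffAt ℝ 1 (fun s : ℝ => (s:ℂ)) s := Complex.ofRealCLM.contDiff.contDiffAt
  unfold pR
  refine ContDiffAt.mul ?_ (ffp_fR_smooth κ s hs)
  simp only [div_eq_mul_inv]
  exact (contDiffAt_const.mul (hc.inv (by simp [hs]))).sub
    (contDiffAt_const.mul ((hc.pow 2).inv (by simp [hs])))

lemma ffp_radial {P : ℝ → ℂ} {P' : ℂ} {z : V3} (hz : z ≠ 0)
    (h : HasDerivAt P ((‖z‖:ℂ) * P') ‖z‖) :
    HasFDerivAt (fun z : V3 => P ‖z‖) ((innerSL ℝ z).smulRight P') z := by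
  have hn : ‖z‖ ≠ 0 := norm_ne_zero_iff.2 hz
  have h1 : HasFDerivAt (fun z : V3 => ‖z‖) ((‖z‖⁻¹) • innerSL ℝ z) z := by
    have h2 := ((hasStrictFDerivAt_norm_sq z).hasFDerivAt).sqrt (by positivity)
    simp only [Real.sqrt_sq (norm_nonneg _)] at h2
    refine h2.congr_fderiv ?_
    ext v
    simp
    field_simp
  have h3 := h.hasFDerivAt.comp z h1
  refine h3.congr_fderiv ?_
  have hn' : (‖z‖:ℂ) ≠ 0 := by exact_mod_cast hn
  ext v
  simp
  field_simp

def Dk (κ : ℝ) (i j : Fin 3) (z : V3) : ℂ :=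
  (if i = j then 1 else 0) * pR κ ‖z‖ + (z i : ℂ) * (z j : ℂ) * qR κ ‖z‖

lemma ffp_pd1 (κ : ℝ) (i : Fin 3) {z : V3} (hz : z ≠ 0) :
    pd i (fun z => fR κ ‖z‖) z = (z i : ℂ) * pR κ ‖z‖ := by
  have h := ffp_radial hz (ffp_fR_deriv κ ‖z‖ (norm_ne_zero_iff.2 hz))
  unfold pd
  rw [h.fderiv]
  simp [EuclideanSpace.inner_single_right]

lemma ffp_pd2 (κ : ℝ) (i j : Fin 3) {z : V3} (hz : z ≠ 0) :
    pd j (fun z => (z i : ℂ) * pR κ ‖z‖) z = Dk κ i j z := by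
  have h := ffp_radial hz (ffp_pR_deriv κ ‖z‖ (norm_ne_zero_iff.2 hz))
  have hc : HasFDerivAt (fun z : V3 => (z i : ℂ))
      (Complex.ofRealCLM.comp (EuclideanSpace.proj (𝕜 := ℝ) i)) z :=
    (Complex.ofRealCLM.comp (EuclideanSpace.proj (𝕜 := ℝ) i : V3 →L[ℝ] ℝ)).hasFDerivAt
  have h2 : HasFDerivAt (fun z : V3 => (z i : ℂ) * pR κ ‖z‖) _ z := hc.mul h
  unfold pd
  rw [HasFDerivAt.fderiv h2]
  simp [EuclideanSpace.inner_single_right, Dk, Pi.single_apply]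
  by_cases hij : i = j <;> simp [hij] <;> ring

lemma ffp_smooth1 (κ : ℝ) : ContDiffOn ℝ 1 (fun z : V3 => fR κ ‖z‖) {0}ᶜ := by
  intro z hz
  have hz' : z ≠ 0 := hz
  exact ((ffp_fR_smooth κ ‖z‖ (norm_ne_zero_iff.2 hz')).comp z
    (contDiffAt_norm ℝ hz')).contDiffWithinAt

lemma ffp_smooth2 (κ : ℝ) (i : Fin 3) :
    ContDiffOn ℝ 1 (fun z : V3 => (z i : ℂ) * pR κ ‖z‖) {0}ᶜ := by
  intro z hz
  have hz' : z ≠ 0 := hz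
  refine ContDiffAt.contDiffWithinAt (ContDiffAt.mul ?_ ?_)
  · exact (Complex.ofRealCLM.comp
      (EuclideanSpace.proj (𝕜 := ℝ) i : V3 →L[ℝ] ℝ)).contDiff.contDiffAt
  · exact (ffp_pR_smooth κ ‖z‖ (norm_ne_zero_iff.2 hz')).comp z (contDiffAt_norm ℝ hz')

lemma ffp_int {E : Type*} [NormedAddCommGroup E] [NormedSpace ℂ E]
    {Γ : Set V3} (hΓ : IsCompact Γ) {μ : Measure V3} (hfin : μ Γ < ⊤)
    {h : V3 → ℂ} (hm : Measurable h) {C : ℝ} (hb : ∀ y ∈ Γ, ‖h y‖ ≤ C)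
    {f : V3 → E} (hf : ContinuousOn f Γ) :
    Integrable (fun y => h y • f y) (μ.restrict Γ) := by
  obtain ⟨B, hB⟩ := hΓ.exists_bound_of_continuousOn hf
  have : IsFiniteMeasure (μ.restrict Γ) := ⟨by simpa using hfin⟩
  refine Integrable.of_bound (C := C * B) ?_ ?_
  · exact hm.aestronglyMeasurable.smul (hf.aestronglyMeasurable_of_isCompact hΓ hΓ.measurableSet)
  · filter_upwards [ae_restrict_mem hΓ.measurableSet] with y hy
    rw [norm_smul]
    exact mul_le_mul (hb y hy) (hB y hy) (norm_nonneg _) ((norm_nonneg _).trans (hb y hy))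

lemma ffp_deriv {Γ : Set V3} (hΓ : IsCompact Γ) {μ : Measure V3} (hfin : μ Γ < ⊤)
    {h : V3 → ℂ} (hm : Measurable h) {C : ℝ} (hb : ∀ y ∈ Γ, ‖h y‖ ≤ C)
    {K : V3 → ℂ} (hK : ContDiffOn ℝ 1 K {0}ᶜ) {x : V3} (hx : x ∉ Γ) :
    DifferentiableAt ℝ (fun x => ∫ y, h y • K (x - y) ∂(μ.restrict Γ)) x ∧
    ∀ i, pd i (fun x => ∫ y, h y • K (x - y) ∂(μ.restrict Γ)) x
      = ∫ y, h y • pd i K (x - y) ∂(μ.restrict Γ) := by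
  have : IsFiniteMeasure (μ.restrict Γ) := ⟨by simpa using hfin⟩
  have hopen : IsOpen ({0}ᶜ : Set V3) := isOpen_compl_singleton
  have hK' : ContinuousOn (fderiv ℝ K) {0}ᶜ := hK.continuousOn_fderiv_of_isOpen hopen le_rfl
  have hd : ∀ z ≠ 0, HasFDerivAt K (fderiv ℝ K z) z := fun z hz =>
    ((hK.differentiableOn one_ne_zero).differentiableAt (hopen.mem_nhds hz)).hasFDerivAt
  have hsub : ∀ w, w ∉ Γ → Set.MapsTo (fun y => w - y) Γ {0}ᶜ := by
    intro w hw y hy h0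
    exact hw (by rw [sub_eq_zero.1 h0]; exact hy)
  have hcK : ∀ w, w ∉ Γ → ContinuousOn (fun y => K (w - y)) Γ := fun w hw =>
    hK.continuousOn.comp (by fun_prop) (hsub w hw)
  have hcK' : ∀ w, w ∉ Γ → ContinuousOn (fun y => fderiv ℝ K (w - y)) Γ := fun w hw =>
    hK'.comp (by fun_prop) (hsub w hw)
  obtain ⟨δ, hδ, hball⟩ := Metric.nhds_basis_closedBall.mem_iff.1
    (hΓ.isClosed.isOpen_compl.mem_nhds hx)
  have hcomp : IsCompact (Metric.closedBall x δ ×ˢ Γ) := (isCompact_closedBall x δ).prod hΓ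
  obtain ⟨B, hB⟩ := hcomp.exists_bound_of_continuousOn
    (f := fun p : V3 × V3 => fderiv ℝ K (p.1 - p.2))
    (hK'.comp (by fun_prop) (fun p hp => hsub p.1 (hball hp.1) hp.2))
  have hI' := ffp_int hΓ hfin hm hb (hcK' x hx)
  have key := hasFDerivAt_integral_of_dominated_of_fderiv_le (𝕜 := ℝ) (μ := μ.restrict Γ)
    (F := fun x y => h y • K (x - y)) (F' := fun x y => h y • fderiv ℝ K (x - y))
    (x₀ := x) (s := Metric.ball x δ) (bound := fun _ => C * B)
    (Metric.ball_mem_nhds x hδ)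
    (by
      filter_upwards [hΓ.isClosed.isOpen_compl.mem_nhds hx] with w hw
      exact (ffp_int hΓ hfin hm hb (hcK w hw)).aestronglyMeasurable)
    (ffp_int hΓ hfin hm hb (hcK x hx)) hI'.aestronglyMeasurable
    (by
      filter_upwards [ae_restrict_mem hΓ.measurableSet] with y hy w hw
      rw [norm_smul]
      exact mul_le_mul (hb y hy) (hB (w, y) ⟨Metric.ball_subset_closedBall hw, hy⟩)
        (norm_nonneg _) ((norm_nonneg _).trans (hb y hy)))
    (integrable_const _)
    (by
      filter_upwards [ae_restrict_mem hΓ.measurableSet] with y hy w hw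
      have hw' : w ∉ Γ := hball (Metric.ball_subset_closedBall hw)
      have := (hd (w - y) (hsub w hw' hy)).comp w ((hasFDerivAt_id w).sub_const y)
      exact HasFDerivAt.const_smul this (h y))
  refine ⟨key.differentiableAt, fun i => ?_⟩
  unfold pd
  rw [key.fderiv, ContinuousLinearMap.integral_apply hI']
  rfl

lemma ffp_A {Γ : Set V3} (hΓ : IsCompact Γ) {μ : Measure V3} (hfin : μ Γ < ⊤) (κ : ℝ)
    {h : V3 → ℂ} (hm : Measurable h) {C : ℝ} (hb : ∀ y ∈ Γ, ‖h y‖ ≤ C)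
    {f : V3 → ℂ} (hf : ∀ x, x ∉ Γ → f x = ∫ y, Phi (κ : ℂ) x y * h y ∂(μ.restrict Γ))
    {x : V3} (hx : x ∉ Γ) (a b : Fin 3) :
    DifferentiableAt ℝ (pd b f) x ∧
    pd a (pd b f) x = ∫ y, h y • Dk κ b a (x - y) ∂(μ.restrict Γ) := by
  have hne : ∀ w, w ∉ Γ → ∀ y ∈ Γ, w - y ≠ 0 := by
    intro w hw y hy h0
    exact hw (by rw [sub_eq_zero.1 h0]; exact hy)
  have hev : ∀ w, w ∉ Γ → ∀ᶠ v in 𝓝 w, v ∉ Γ := fun w hw =>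
    hΓ.isClosed.isOpen_compl.mem_nhds hw
  have h1 : ∀ w, w ∉ Γ → pd b f w
      = ∫ y, h y • (fun z : V3 => (z b : ℂ) * pR κ ‖z‖) (w - y) ∂(μ.restrict Γ) := by
    intro w hw
    have e1 : f =ᶠ[𝓝 w]
        (fun x => ∫ y, h y • (fun z : V3 => fR κ ‖z‖) (x - y) ∂(μ.restrict Γ)) := by
      filter_upwards [hev w hw] with v hv
      rw [hf v hv]
      congr 1
      ext y
      simp only [Phi, fR, smul_eq_mul]
      ring
    have e2 := (ffp_deriv hΓ hfin hm hb (ffp_smooth1 κ) hw).2 b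
    have e3 : pd b f w = pd b (fun x => ∫ y, h y • (fun z : V3 => fR κ ‖z‖) (x - y)
        ∂(μ.restrict Γ)) w := by
      unfold pd
      rw [e1.fderiv_eq]
    rw [e3, e2]
    refine setIntegral_congr_fun hΓ.measurableSet (fun y hy => ?_)
    simp only
    rw [ffp_pd1 κ b (hne w hw y hy)]
  have e1 : pd b f =ᶠ[𝓝 x] (fun w =>
      ∫ y, h y • (fun z : V3 => (z b : ℂ) * pR κ ‖z‖) (w - y) ∂(μ.restrict Γ)) := by
    filter_upwards [hev x hx] with v hv
    exact h1 v hv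
  obtain ⟨d1, d2⟩ := ffp_deriv hΓ hfin hm hb (ffp_smooth2 κ b) hx
  refine ⟨d1.congr_of_eventuallyEq e1, ?_⟩
  have e3 : pd a (pd b f) x = pd a (fun w =>
      ∫ y, h y • (fun z : V3 => (z b : ℂ) * pR κ ‖z‖) (w - y) ∂(μ.restrict Γ)) x := by
    rw [pd, e1.fderiv_eq]
    rfl
  rw [e3, d2 a]
  refine setIntegral_congr_fun hΓ.measurableSet (fun y hy => ?_)
  simp only
  rw [ffp_pd2 κ b a (hne x hx y hy)]

/-- the rescaled kernel, continuous up to `t = 1/r = 0` -/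
def Fk (κ : ℝ) (i j : Fin 3) (p : ℝ × V3 × V3) : ℂ :=
  Complex.exp (Complex.I * κ *
    (((-2 * dotR p.2.1 p.2.2 + p.1 * ‖p.2.2‖^2) / (‖p.2.1 - p.1 • p.2.2‖ + 1) : ℝ) : ℂ))
  / (4 * (π:ℂ) * ((‖p.2.1 - p.1 • p.2.2‖ : ℝ) : ℂ)) *
  ((if i = j then 1 else 0) * (Complex.I * κ * p.1 / ((‖p.2.1 - p.1 • p.2.2‖ : ℝ) : ℂ)
      - (p.1:ℂ)^2 / ((‖p.2.1 - p.1 • p.2.2‖ : ℝ) : ℂ)^2)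
   + (((p.2.1 - p.1 • p.2.2) i : ℝ) : ℂ) * (((p.2.1 - p.1 • p.2.2) j : ℝ) : ℂ) *
     (-(κ:ℂ)^2 / ((‖p.2.1 - p.1 • p.2.2‖ : ℝ) : ℂ)^2
      - 3 * Complex.I * κ * p.1 / ((‖p.2.1 - p.1 • p.2.2‖ : ℝ) : ℂ)^3
      + 3 * (p.1:ℂ)^2 / ((‖p.2.1 - p.1 • p.2.2‖ : ℝ) : ℂ)^4))

lemma ffp_Fk_cont (κ : ℝ) (i j : Fin 3) {S : Set (ℝ × V3 × V3)}
    (hS : ∀ p ∈ S, p.2.1 - p.1 • p.2.2 ≠ 0) : ContinuousOn (Fk κ i j) S := by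
  have hn : ContinuousOn (fun p : ℝ × V3 × V3 => ((‖p.2.1 - p.1 • p.2.2‖ : ℝ) : ℂ)) S := by
    fun_prop
  have hn0 : ∀ p ∈ S, ((‖p.2.1 - p.1 • p.2.2‖ : ℝ) : ℂ) ≠ 0 := fun p hp => by
    exact_mod_cast norm_ne_zero_iff.2 (hS p hp)
  have hc : ∀ i : Fin 3,
      ContinuousOn (fun p : ℝ × V3 × V3 => (((p.2.1 - p.1 • p.2.2) i : ℝ) : ℂ)) S := by
    intro i; fun_prop
  have hd : ContinuousOn (fun p : ℝ × V3 × V3 =>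
      (((-2 * dotR p.2.1 p.2.2 + p.1 * ‖p.2.2‖^2) / (‖p.2.1 - p.1 • p.2.2‖ + 1) : ℝ) : ℂ)) S := by
    refine Complex.continuous_ofReal.comp_continuousOn (ContinuousOn.div ?_ ?_ ?_)
    · unfold dotR; fun_prop
    · fun_prop
    · intro p _; positivity
  have ht : ContinuousOn (fun p : ℝ × V3 × V3 => (p.1 : ℂ)) S := by fun_prop
  unfold Fk
  refine ContinuousOn.mul (ContinuousOn.div ?_ ?_ ?_) (ContinuousOn.add ?_ ?_)
  · exact (continuousOn_const.mul hd).cexp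
  · exact continuousOn_const.mul hn
  · intro p hp
    have hpi : (π:ℂ) ≠ 0 := by exact_mod_cast Real.pi_ne_zero
    exact mul_ne_zero (mul_ne_zero (by norm_num) hpi) (hn0 p hp)
  · refine continuousOn_const.mul (ContinuousOn.sub ?_ ?_)
    · exact (continuousOn_const.mul ht).div hn hn0
    · exact (ht.pow 2).div (hn.pow 2) (fun p hp => pow_ne_zero 2 (hn0 p hp))
  · refine ((hc i).mul (hc j)).mul (ContinuousOn.add (ContinuousOn.sub ?_ ?_) ?_)
    · exact continuousOn_const.div (hn.pow 2) (fun p hp => pow_ne_zero 2 (hn0 p hp))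
    · exact (continuousOn_const.mul ht).div (hn.pow 3) (fun p hp => pow_ne_zero 3 (hn0 p hp))
    · exact (continuousOn_const.mul (ht.pow 2)).div (hn.pow 4)
        (fun p hp => pow_ne_zero 4 (hn0 p hp))

lemma ffp_dot (x y : V3) : dotR x y = inner ℝ x y := by
  simp [dotR, PiLp.inner_apply, mul_comm]

lemma ffp_Fk_zero (κ : ℝ) (i j : Fin 3) (x y : V3) (hx : ‖x‖ = 1) :
    Fk κ i j (0, x, y) = -(κ:ℂ)^2 / (4 * π) * (x i : ℂ) * (x j : ℂ) *
      Complex.exp (-(Complex.I * κ * (dotR x y : ℝ))) := by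
  have : ((-2 * dotR x y + 0 * ‖y‖^2) / (1 + 1) : ℝ) = - dotR x y := by ring
  simp only [Fk, zero_smul, sub_zero, hx, this]
  simp
  ring

lemma ffp_Fk_eq (κ : ℝ) (i j : Fin 3) (x y : V3) (hx : ‖x‖ = 1) (r : ℝ) (hr : 0 < r)
    (hne : x - r⁻¹ • y ≠ 0) :
    (r : ℂ) * Complex.exp (-(Complex.I * κ * (r : ℝ))) * Dk κ i j (r • x - y)
      = Fk κ i j (r⁻¹, x, y) := by
  have hz : r • x - y = r • (x - r⁻¹ • y) := by
    rw [smul_sub, smul_smul, mul_inv_cancel₀ hr.ne', one_smul]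
  have hsq : ‖x - r⁻¹ • y‖^2 = 1 - 2 * r⁻¹ * dotR x y + r⁻¹^2 * ‖y‖^2 := by
    rw [norm_sub_sq_real, hx, inner_smul_right, ffp_dot, norm_smul, Real.norm_eq_abs,
      abs_of_pos (inv_pos.2 hr)]
    ring
  have hex : (-2 * dotR x y + r⁻¹ * ‖y‖^2) / (‖x - r⁻¹ • y‖ + 1) = r * ‖x - r⁻¹ • y‖ - r := by
    rw [div_eq_iff (by positivity)]
    have : (r * ‖x - r⁻¹ • y‖ - r) * (‖x - r⁻¹ • y‖ + 1) = r * (‖x - r⁻¹ • y‖^2 - 1) := by ring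
    rw [this, hsq]
    field_simp
    ring
  have hn : ‖r • x - y‖ = r * ‖x - r⁻¹ • y‖ := by
    rw [hz, norm_smul, Real.norm_eq_abs, abs_of_pos hr]
  simp only [Fk, Dk, pR, qR, fR, hex, hn]
  rw [hz]
  have hn0 : ‖x - r⁻¹ • y‖ ≠ 0 := norm_ne_zero_iff.2 hne
  generalize hw : x - r⁻¹ • y = w at *
  have hn0' : (‖w‖ : ℂ) ≠ 0 := by exact_mod_cast hn0
  have hr0 : (r : ℂ) ≠ 0 := by exact_mod_cast hr.ne'
  have hpi : (π:ℂ) ≠ 0 := by exact_mod_cast Real.pi_ne_zero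
  have hexp : Complex.exp (Complex.I * κ * ((r * ‖w‖ - r : ℝ) : ℂ))
      = Complex.exp (-(Complex.I * κ * (r : ℝ))) *
        Complex.exp (Complex.I * κ * ((r * ‖w‖ : ℝ) : ℂ)) := by
    rw [← Complex.exp_add]
    congr 1
    push_cast
    ring
  rw [hexp]
  generalize Complex.exp (-(Complex.I * κ * (r : ℝ))) = E1
  generalize Complex.exp (Complex.I * κ * ((r * ‖w‖ : ℝ) : ℂ)) = E2
  simp only [PiLp.smul_apply, smul_eq_mul]
  push_cast
  field_simp

lemma ffp_unif (κ : ℝ) (i j : Fin 3) (M ε : ℝ) (hε : 0 < ε) :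
    ∃ R : ℝ, ∀ r : ℝ, R ≤ r → ∀ x y : V3, ‖x‖ = 1 → ‖y‖ ≤ M →
      ‖(r : ℂ) * Complex.exp (-(Complex.I * κ * (r : ℝ))) * Dk κ i j (r • x - y)
        - (-(κ:ℂ)^2 / (4 * π) * (x i : ℂ) * (x j : ℂ) *
      Complex.exp (-(Complex.I * κ * (dotR x y : ℝ))))‖ ≤ ε := by
  set t0 : ℝ := (2 * (|M| + 1))⁻¹ with ht0
  have hM : 0 < |M| + 1 := by positivity
  have ht0p : 0 < t0 := by positivity
  have hne : ∀ t, 0 ≤ t → t ≤ t0 → ∀ x y : V3, ‖x‖ = 1 → ‖y‖ ≤ M → x - t • y ≠ 0 := by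
    intro t h0 h1 x y hx hy h
    have h2 : ‖x‖ = t * ‖y‖ := by
      rw [sub_eq_zero.1 h, norm_smul, Real.norm_eq_abs, abs_of_nonneg h0]
    have h3 : t * ‖y‖ ≤ t0 * (|M| + 1) :=
      mul_le_mul h1 (by linarith [le_abs_self M]) (norm_nonneg _) ht0p.le
    have h4 : t0 * (|M| + 1) = 1/2 := by rw [ht0]; field_simp
    linarith
  set S : Set (ℝ × V3 × V3) :=
    Set.Icc 0 t0 ×ˢ (Metric.sphere (0:V3) 1 ×ˢ Metric.closedBall (0:V3) M) with hSdef
  have hS : IsCompact S :=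
    isCompact_Icc.prod ((isCompact_sphere _ _).prod (isCompact_closedBall _ _))
  have hcont : ContinuousOn (Fk κ i j) S := ffp_Fk_cont κ i j (fun p hp =>
    hne p.1 hp.1.1 hp.1.2 _ _ (by simpa using hp.2.1) (by simpa using hp.2.2))
  obtain ⟨δ, hδ, hu⟩ := Metric.uniformContinuousOn_iff.1
    (hS.uniformContinuousOn_of_continuous hcont) ε hε
  refine ⟨max (t0⁻¹) (δ⁻¹ + 1), fun r hr x y hx hy => ?_⟩
  have hr1 : t0⁻¹ ≤ r := (le_max_left _ _).trans hr
  have hr2 : δ⁻¹ < r := by linarith [(le_max_right (t0⁻¹) (δ⁻¹ + 1)).trans hr]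
  have hrp : 0 < r := (inv_pos.2 hδ).trans hr2
  have h1 : r⁻¹ ≤ t0 := inv_le_of_inv_le₀ ht0p hr1
  have h2 : r⁻¹ < δ := inv_lt_of_inv_lt₀ hδ hr2
  have h0 : 0 < r⁻¹ := inv_pos.2 hrp
  rw [ffp_Fk_eq κ i j x y hx r hrp (hne _ h0.le h1 x y hx hy), ← ffp_Fk_zero κ i j x y hx,
    ← dist_eq_norm]
  refine (hu _ ⟨⟨h0.le, h1⟩, by simpa using hx, by simpa using hy⟩
    _ ⟨⟨le_rfl, ht0p.le⟩, by simpa using hx, by simpa using hy⟩ ?_).le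
  simp [Prod.dist_eq, abs_of_pos hrp, h2, hδ]

lemma ffp_Dk_cont (κ : ℝ) (i j : Fin 3) : ContinuousOn (Dk κ i j) {0}ᶜ := by
  have h := ((ffp_smooth2 κ i).continuousOn_fderiv_of_isOpen isOpen_compl_singleton le_rfl).clm_apply
    (continuousOn_const (c := (EuclideanSpace.single j (1:ℝ) : V3)))
  refine h.congr (fun z hz => ?_)
  exact (ffp_pd2 κ i j hz).symm

lemma ffp_lim {Γ : Set V3} (hΓ : IsCompact Γ) {μ : Measure V3} (hfin : μ Γ < ⊤) (κ : ℝ)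
    {h : V3 → ℂ} (hm : Measurable h) {C : ℝ} (hb : ∀ y ∈ Γ, ‖h y‖ ≤ C)
    (i j : Fin 3) (ε : ℝ) (hε : 0 < ε) :
    ∃ R : ℝ, ∀ r : ℝ, R ≤ r → ∀ x : V3, ‖x‖ = 1 → r • x ∉ Γ ∧
      ‖(r : ℂ) * Complex.exp (-(Complex.I * κ * (r : ℝ))) *
          ∫ y, h y • Dk κ i j (r • x - y) ∂(μ.restrict Γ)
        - (-(κ:ℂ)^2 / (4 * π) * (x i : ℂ) * (x j : ℂ) *
          ∫ y, h y * Complex.exp (-(Complex.I * κ * (dotR x y : ℝ))) ∂(μ.restrict Γ))‖ ≤ ε := by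
  obtain ⟨M, hM⟩ := hΓ.isBounded.exists_norm_le
  set m : ℝ := (μ.restrict Γ).real Set.univ with hmdef
  have hm0 : 0 ≤ m := measureReal_nonneg
  have : IsFiniteMeasure (μ.restrict Γ) := ⟨by simpa using hfin⟩
  obtain ⟨R, hR⟩ := ffp_unif κ i j M (ε / ((|C| + 1) * (m + 1))) (by positivity)
  refine ⟨max R (|M| + 1), fun r hr x hx => ?_⟩
  have hr1 : R ≤ r := (le_max_left _ _).trans hr
  have hr2 : |M| + 1 ≤ r := (le_max_right _ _).trans hr
  have hrp : 0 < r := by linarith [abs_nonneg M]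
  have hnot : r • x ∉ Γ := by
    intro hh
    have := hM _ hh
    rw [norm_smul, hx, Real.norm_eq_abs, abs_of_pos hrp] at this
    linarith [le_abs_self M]
  refine ⟨hnot, ?_⟩
  have hmaps : Set.MapsTo (fun y => r • x - y) Γ {0}ᶜ := by
    intro y hy h0
    exact hnot (by rw [sub_eq_zero.1 h0]; exact hy)
  have I1 := ffp_int hΓ hfin hm hb
    ((ffp_Dk_cont κ i j).comp (f := fun y => r • x - y) (by fun_prop) hmaps)
  have I2 := ffp_int hΓ hfin hm hb
    (f := fun y : V3 => Complex.exp (-(Complex.I * κ * (dotR x y : ℝ))))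
    (by unfold dotR; fun_prop)
  simp only [smul_eq_mul, Function.comp_def] at I1 I2 ⊢
  rw [← integral_const_mul, ← integral_const_mul,
    ← integral_sub (I1.const_mul _) (I2.const_mul _)]
  have hbound : ∀ᵐ y ∂(μ.restrict Γ),
      ‖(r : ℂ) * Complex.exp (-(Complex.I * κ * (r : ℝ))) * (h y * Dk κ i j (r • x - y))
        - (-(κ:ℂ)^2 / (4 * π) * (x i : ℂ) * (x j : ℂ) *
          (h y * Complex.exp (-(Complex.I * κ * (dotR x y : ℝ)))))‖
        ≤ (|C| + 1) * (ε / ((|C| + 1) * (m + 1))) := by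
    filter_upwards [ae_restrict_mem hΓ.measurableSet] with y hy
    have e : (r : ℂ) * Complex.exp (-(Complex.I * κ * (r : ℝ))) * (h y * Dk κ i j (r • x - y))
        - (-(κ:ℂ)^2 / (4 * π) * (x i : ℂ) * (x j : ℂ) *
          (h y * Complex.exp (-(Complex.I * κ * (dotR x y : ℝ)))))
        = h y * ((r : ℂ) * Complex.exp (-(Complex.I * κ * (r : ℝ))) * Dk κ i j (r • x - y)
        - (-(κ:ℂ)^2 / (4 * π) * (x i : ℂ) * (x j : ℂ) *
      Complex.exp (-(Complex.I * κ * (dotR x y : ℝ))))) := by ring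
    rw [e, norm_mul]
    exact mul_le_mul ((hb y hy).trans (by linarith [le_abs_self C]))
      (hR r hr1 x y hx (hM y hy)) (norm_nonneg _) (by positivity)
  refine (norm_integral_le_of_norm_le_const hbound).trans ?_
  rw [← hmdef]
  have e : (|C| + 1) * (ε / ((|C| + 1) * (m + 1))) * m = ε * (m / (m + 1)) := by
    field_simp
  rw [e]
  have : m / (m + 1) ≤ 1 := by
    rw [div_le_one (by positivity)]; linarith
  nlinarith

lemma ffp_four (k : ℂ) (T1 T2 T3 T4 : ℂ) (η : ℝ) (h1 : ‖T1‖ ≤ η) (h2 : ‖T2‖ ≤ η)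
    (h3 : ‖T3‖ ≤ η) (h4 : ‖T4‖ ≤ η) :
    ‖k * (T1 - T2 - (T3 - T4))‖ ≤ ‖k‖ * (4 * η) := by
  rw [norm_mul]
  refine mul_le_mul_of_nonneg_left ?_ (norm_nonneg _)
  have a1 := norm_sub_le T1 T2
  have a2 := norm_sub_le T3 T4
  have a3 := norm_sub_le (T1 - T2) (T3 - T4)
  linarith

/-- far-field pattern of the vector potential `ψ = κ⁻² curl curl A`,
uniformly over directions on the unit sphere. -/
theorem vector_potential_far_field
    (Γ : Set V3) (hΓ : IsCompact Γ)
    (σ : Measure V3) (hσ : σ = (μH[2] : Measure V3).restrict Γ)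
    (hfin : σ Set.univ < ⊤)
    (κ : ℝ) (hκ : 0 < κ)
    (g : V3 → Fin 3 → ℂ) (hmeas : Measurable g)
    (C : ℝ) (hbd : ∀ y ∈ Γ, ∀ j, ‖g y j‖ ≤ C)
    (A : V3 → Fin 3 → ℂ) (hA : ∀ x, x ∉ Γ → ∀ j, A x j = ∫ y, Phi (κ : ℂ) x y * g y j ∂σ)
    (ψ : V3 → Fin 3 → ℂ) (hψ : ∀ x j, ψ x j = ((κ : ℂ)^2)⁻¹ * curl3 (curl3 A) x j)
    (ψinf : V3 → Fin 3 → ℂ)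
    (hψinf : ∀ xh : V3, ∀ j, ψinf xh j =
      (1 / (4 * (π : ℂ))) * crossC (castC xh)
        (fun k => ∫ y, crossC (g y) (castC xh) k * Complex.exp (-(Complex.I * κ * (dotR xh y : ℝ))) ∂σ) j) :
    ∀ ε > 0, ∃ R : ℝ, ∀ r : ℝ, R ≤ r → ∀ xh : V3, ‖xh‖ = 1 → ∀ j,
      ‖(r : ℂ) * Complex.exp (-(Complex.I * κ * (r : ℝ))) * ψ (r • xh) j - ψinf xh j‖ < ε := by
  intro ε hε
  subst hσ
  have hfin' : (μH[2] : Measure V3) Γ < ⊤ := by simpa using hfin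
  have hmk : ∀ k, Measurable (fun y => g y k) := fun k => (measurable_pi_apply k).comp hmeas
  have hbk : ∀ k, ∀ y ∈ Γ, ‖g y k‖ ≤ C := fun k y hy => hbd y hy k
  have hη : 0 < ε * κ^2 / 5 := by positivity
  choose R hR using fun a b k : Fin 3 =>
    ffp_lim hΓ hfin' κ (hmk k) (hbk k) a b (ε * κ^2 / 5) hη
  refine ⟨∑ a, ∑ b, ∑ k, |R a b k|, fun r hr x hx j => ?_⟩
  have hRr : ∀ a b k, R a b k ≤ r := by
    intro a b k
    refine le_trans ?_ hr
    refine (le_abs_self _).trans ?_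
    refine (Finset.single_le_sum (f := fun k => |R a b k|) (fun _ _ => abs_nonneg _)
      (Finset.mem_univ k)).trans ?_
    refine (Finset.single_le_sum (f := fun b => ∑ k, |R a b k|)
      (fun _ _ => Finset.sum_nonneg (fun _ _ => abs_nonneg _)) (Finset.mem_univ b)).trans ?_
    exact Finset.single_le_sum (f := fun a => ∑ b, ∑ k, |R a b k|)
      (fun _ _ => Finset.sum_nonneg (fun _ _ => Finset.sum_nonneg (fun _ _ => abs_nonneg _)))
      (Finset.mem_univ a)
  have hnot : r • x ∉ Γ := (hR 0 0 0 r (hRr 0 0 0) x hx).1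
  have hT := fun a b k => (hR a b k r (hRr a b k) x hx).2
  have hAA := fun a b k => ffp_A hΓ hfin' κ (hmk k) (hbk k) (f := fun y => A y k)
    (fun w hw => hA w hw k) hnot a b
  have hcc : ∀ a b c d e : Fin 3, pd a (fun y => pd b (fun y => A y d) y - pd c (fun y => A y e) y)
      (r • x) = pd a (pd b (fun y => A y d)) (r • x) - pd a (pd c (fun y => A y e)) (r • x) := by
    intro a b c d e
    have := fderiv_fun_sub (hAA a b d).1 (hAA a c e).1
    unfold pd at this ⊢
    rw [this]
    rfl
  have hG : ∀ k l : Fin 3, ∀ u v : ℂ,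
      ∫ y, (g y k * u - g y l * v) * Complex.exp (-(Complex.I * κ * (dotR x y : ℝ)))
        ∂(μH[2] : Measure V3).restrict Γ
      = u * (∫ y, g y k * Complex.exp (-(Complex.I * κ * (dotR x y : ℝ)))
        ∂(μH[2] : Measure V3).restrict Γ) - v * (∫ y, g y l *
          Complex.exp (-(Complex.I * κ * (dotR x y : ℝ))) ∂(μH[2] : Measure V3).restrict Γ) := by
    intro k l u v
    have I2 := fun k => ffp_int hΓ hfin' (hmk k) (hbk k)
      (f := fun y : V3 => Complex.exp (-(Complex.I * κ * (dotR x y : ℝ))))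
      (by unfold dotR; fun_prop)
    simp only [smul_eq_mul] at I2
    rw [← integral_const_mul, ← integral_const_mul,
      ← integral_sub ((I2 k).const_mul _) ((I2 l).const_mul _)]
    congr 1
    ext y
    ring
  have hκ0 : (κ:ℂ) ≠ 0 := by exact_mod_cast hκ.ne'
  have hpi : (π:ℂ) ≠ 0 := by exact_mod_cast Real.pi_ne_zero
  have hfinal : ‖((κ:ℂ)^2)⁻¹‖ * (4 * (ε * κ^2 / 5)) < ε := by
    rw [norm_inv, norm_pow, Complex.norm_real, Real.norm_eq_abs, sq_abs]
    have : (κ^2)⁻¹ * (4 * (ε * κ^2 / 5)) = 4 / 5 * ε := by field_simp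
    rw [this]; linarith
  rw [hψ, hψinf]
  fin_cases j
  · refine lt_of_le_of_lt (le_of_eq_of_le (congrArg norm ?_)
      (ffp_four (((κ:ℂ)^2)⁻¹) _ _ _ _ _ (hT 0 1 1) (hT 1 1 0) (hT 2 2 0) (hT 0 2 2))) hfinal
    simp [curl3, crossC, castC, hcc, hG, (hAA _ _ _).2]
    field_simp
    ring
  · refine lt_of_le_of_lt (le_of_eq_of_le (congrArg norm ?_)
      (ffp_four (((κ:ℂ)^2)⁻¹) _ _ _ _ _ (hT 1 2 2) (hT 2 2 1) (hT 0 0 1) (hT 1 0 0))) hfinal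
    simp [curl3, crossC, castC, hcc, hG, (hAA _ _ _).2]
    field_simp
    ring
  · refine lt_of_le_of_lt (le_of_eq_of_le (congrArg norm ?_)
      (ffp_four (((κ:ℂ)^2)⁻¹) _ _ _ _ _ (hT 2 0 0) (hT 0 0 2) (hT 1 1 2) (hT 2 1 1))) hfinal
    simp [curl3, crossC, castC, hcc, hG, (hAA _ _ _).2]
    field_simp
    ring
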